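/- Let N ≥ 3 be odd, ζ ∈ ℝ, ν1, ν2 ≥ 0 with ν1+ν2 = 1, V = ν1−ν2, and ρ = ν1|Ψ1⟩⟨Ψ1| + ν2|Ψ2⟩⟨Ψ2| on (ℂ²)^{⊗N} with |Ψ1⟩ = cos(ζ/2)|0⟩^{⊗N} + sin(ζ/2)|1⟩^{⊗N}, |Ψ2⟩ = sin(ζ/2)|0⟩^{⊗N} − cos(ζ/2)|1⟩^{⊗N}. Take settings n_{1,1} = n(θ,0), n_{1,2} = n(0,0), and n_{k,1} = n(π/2,0), n_{k,2} = n(π,0) for 2 ≤ k ≤ N. Let Q(i_1,…,i_N) = Tr(ρ · ⊗_{k=1}^N (n_{k,i_k}·σ)) for i_k ∈ {1,2}, and Q(i_1,…,i_{N−1},0) = Tr(ρ · (⊗_{k=1}^{N−1} (n_{k,i_k}·σ)) ⊗ I). Then I^N := (1/2^{N−1}) Σ_{(i_1,…,i_{N−1})∈{1,2}^{N−1}} Σ_{i_N∈{0,1}} Q(i_1,…,i_N) − Q(2,…,2,0) = 1 + (cos²(θ/2)/2^{N−2})·( V sinζ tan(θ/2) − 1 ) for every θ ∈ [0,π). In particular,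 if V sinζ > 0 and tan(θ/2) > 1/(V sinζ), then I^N > 1. -/

import Mathlib

/-!
Both `|Ψ1⟩` and `|Ψ2⟩` lie in the span of `|0…0⟩` and `|1…1⟩`, so the expectation of a product
observable `⊗ M_k` in the state `ρ` is
`p ∏ (M_k)₀₀ + q ∏ (M_k)₁₁ + (V sin ζ / 2) (∏ (M_k)₀₁ + ∏ (M_k)₁₀)` with `p + q = 1`
(`trace_ghzRho`). The last party measures either nothing or `σ_x`; the former kills the
off-diagonal products, the latter the diagonal ones (`oddQ_eq`).

The sum over the settings of the other `N - 1 = 2m` parties factorizes over the parties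
(`sum_prod_setting`): the first contributes `n(θ,0)·σ + σ_z`, with diagonal entries
`±(1 + cos θ)` and off-diagonal entries `sin θ`, and each of the other `2m - 1` contributes
`σ_x - σ_z`, with diagonal entries `∓1` and off-diagonal entries `1`. As `2m - 1` is odd, the sum
equals `V sin ζ sin θ - (1 + cos θ)`, and likewise `Q(2,…,2,0) = -1` (`oddBell_eq`). The
half-angle formulas give the closed form, from which the violation is immediate.
-/

open Matrix Complex
open scoped ComplexOrder

noncomputable section

/-- The `j`-th standard basis vector of `ℂ²` (`|0⟩` and `|1⟩`). -/
def e2 (j : Fin 2) : Fin 2 → ℂ := fun i => if i = j then 1 else 0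

/-- Tensor (Kronecker) product of two qubit vectors. -/
def tp2 (v w : Fin 2 → ℂ) : Fin 2 × Fin 2 → ℂ := fun p => v p.1 * w p.2

/-- Tensor (Kronecker) product of three qubit vectors. -/
def tp3 (v w u : Fin 2 → ℂ) : Fin 2 × Fin 2 × Fin 2 → ℂ :=
  fun p => v p.1 * w p.2.1 * u p.2.2

/-- Kronecker product of two `2×2` matrices. -/
def tm2 (A B : Matrix (Fin 2) (Fin 2) ℂ) : Matrix (Fin 2 × Fin 2) (Fin 2 × Fin 2) ℂ :=
  Matrix.of fun p q => A p.1 q.1 * B p.2 q.2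

/-- Kronecker product of three `2×2` matrices. -/
def tm3 (A B C : Matrix (Fin 2) (Fin 2) ℂ) :
    Matrix (Fin 2 × Fin 2 × Fin 2) (Fin 2 × Fin 2 × Fin 2) ℂ :=
  Matrix.of fun p q => A p.1 q.1 * B p.2.1 q.2.1 * C p.2.2 q.2.2

/-- Outer product `|v⟩⟨v|`. -/
def outer {n : Type*} [Fintype n] (v : n → ℂ) : Matrix n n ℂ := Matrix.vecMulVec v (star v)

def sigmaX : Matrix (Fin 2) (Fin 2) ℂ := !![0, 1; 1, 0]
def sigmaY : Matrix (Fin 2) (Fin 2) ℂ := !![0, -Complex.I; Complex.I, 0]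
def sigmaZ : Matrix (Fin 2) (Fin 2) ℂ := !![1, 0; 0, -1]

/-- The spin observable `n(θ,φ)·σ = sinθ cosφ σx + sinθ sinφ σy + cosθ σz`. -/
def nsigma (θ φ : ℝ) : Matrix (Fin 2) (Fin 2) ℂ :=
  ((Real.sin θ * Real.cos φ : ℝ) : ℂ) • sigmaX +
    ((Real.sin θ * Real.sin φ : ℝ) : ℂ) • sigmaY + ((Real.cos θ : ℝ) : ℂ) • sigmaZ

/-- Kronecker tensor product of `N` `2×2` matrices, as a matrix indexed by `Fin N → Fin 2`. -/
def tpow {N : ℕ} (M : Fin N → Matrix (Fin 2) (Fin 2) ℂ) :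
    Matrix (Fin N → Fin 2) (Fin N → Fin 2) ℂ :=
  Matrix.of fun i j => ∏ k, M k (i k) (j k)

/-- Kronecker tensor product of `N` qubit vectors, indexed by `Fin N → Fin 2`. -/
def vpow {N : ℕ} (v : Fin N → (Fin 2 → ℂ)) : (Fin N → Fin 2) → ℂ :=
  fun i => ∏ k, v k (i k)

/-- `|Ψ1⟩ = cos(ζ/2)|0⟩^{⊗N} + sin(ζ/2)|1⟩^{⊗N}`. -/
def ghzPsi1 (N : ℕ) (ζ : ℝ) : (Fin N → Fin 2) → ℂ := fun i =>
  (Real.cos (ζ / 2) : ℂ) * vpow (fun _ => e2 0) i +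
    (Real.sin (ζ / 2) : ℂ) * vpow (fun _ => e2 1) i

/-- `|Ψ2⟩ = sin(ζ/2)|0⟩^{⊗N} − cos(ζ/2)|1⟩^{⊗N}`. -/
def ghzPsi2 (N : ℕ) (ζ : ℝ) : (Fin N → Fin 2) → ℂ := fun i =>
  (Real.sin (ζ / 2) : ℂ) * vpow (fun _ => e2 0) i -
    (Real.cos (ζ / 2) : ℂ) * vpow (fun _ => e2 1) i

/-- `ρ = ν1|Ψ1⟩⟨Ψ1| + ν2|Ψ2⟩⟨Ψ2|` on `(ℂ²)^{⊗N}`. -/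
def ghzRho (N : ℕ) (ζ ν1 ν2 : ℝ) : Matrix (Fin N → Fin 2) (Fin N → Fin 2) ℂ :=
  (ν1 : ℂ) • outer (ghzPsi1 N ζ) + (ν2 : ℂ) • outer (ghzPsi2 N ζ)

/-- Measurement settings for the odd-`N` Bell test (setting "1" encoded by `0 : Fin 2`,
"2" by `1 : Fin 2`): `n_{1,1} = n(θ,0)`, `n_{1,2} = n(0,0)`, and for `k ≥ 2`
`n_{k,1} = n(π/2,0)`, `n_{k,2} = n(π,0)`. -/
def oddSetting {N : ℕ} (θ : ℝ) (k : Fin N) (j : Fin 2) : Matrix (Fin 2) (Fin 2) ℂ :=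
  if (k : ℕ) = 0 then (if j = 0 then nsigma θ 0 else nsigma 0 0)
  else (if j = 0 then nsigma (Real.pi / 2) 0 else nsigma Real.pi 0)

/-- `Q(i_1,…,i_{N−1},s)` for `N = 2m+1`: the parties `1,…,N−1` measure according to the
settings `i`, while the last party measures `n_{N,1}·σ` if `s = 1` and is not measured
(identity) if `s = 0`. -/
def oddQ (m : ℕ) (ζ ν1 ν2 θ : ℝ) (i : Fin (2 * m) → Fin 2) (s : Fin 2) : ℂ :=
  (ghzRho (2 * m + 1) ζ ν1 ν2 *
    tpow (fun k : Fin (2 * m + 1) =>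
      if h : (k : ℕ) < 2 * m then oddSetting θ k (i ⟨k, h⟩)
      else (if s = 0 then 1 else oddSetting θ k 0))).trace

/-- The Bell expression
`I^N = (1/2^{N−1}) Σ_{i∈{1,2}^{N−1}} Σ_{i_N∈{0,1}} Q(i,i_N) − Q(2,…,2,0)`, `N = 2m+1`. -/
def oddBell (m : ℕ) (ζ ν1 ν2 θ : ℝ) : ℂ :=
  (1 / 2 ^ (2 * m) : ℂ) *
      (∑ i : Fin (2 * m) → Fin 2, ∑ s : Fin 2, oddQ m ζ ν1 ν2 θ i s) -
    oddQ m ζ ν1 ν2 θ (fun _ => 1) 0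

lemma vpow_e2 {N : ℕ} (j : Fin 2) (i : Fin N → Fin 2) :
    vpow (fun _ => e2 j) i = if i = (fun _ => j) then 1 else 0 := by
  simp only [vpow, e2, Finset.prod_ite_zero, Finset.prod_const_one, funext_iff, Finset.mem_univ,
    true_imp_iff]

/-- A superposition `a|0…0⟩ + b|1…1⟩` with real amplitudes sees only the four corner entries of a
product observable. -/
lemma trace_ghz {N : ℕ} (a b : ℝ) (M : Fin N → Matrix (Fin 2) (Fin 2) ℂ) :
    (outer (fun i => (a : ℂ) * vpow (fun _ => e2 0) i + (b : ℂ) * vpow (fun _ => e2 1) i) *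
        tpow M).trace =
      a ^ 2 * ∏ k, M k 0 0 + b ^ 2 * ∏ k, M k 1 1 +
        a * b * (∏ k, M k 0 1 + ∏ k, M k 1 0) := by
  simp only [outer, Matrix.trace, Matrix.diag, Matrix.mul_apply, Matrix.vecMulVec_apply, tpow,
    Matrix.of_apply, Pi.star_apply, vpow_e2, star_add, mul_ite, mul_one, mul_zero,
    add_mul, mul_add, Finset.sum_add_distrib, ite_mul, zero_mul, apply_ite star, star_zero,
    Finset.sum_ite_eq', Finset.mem_univ, if_true, RCLike.star_def, Complex.conj_ofReal]
  ring

/-- The expectation of a product observable in `ρ`: the corner entries are weighted by the two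
populations of `ρ` and by its coherence `(ν1 - ν2) sin ζ / 2`. -/
lemma trace_ghzRho {N : ℕ} (ζ ν1 ν2 : ℝ) (M : Fin N → Matrix (Fin 2) (Fin 2) ℂ) :
    (ghzRho N ζ ν1 ν2 * tpow M).trace =
      (ν1 * Real.cos (ζ / 2) ^ 2 + ν2 * Real.sin (ζ / 2) ^ 2 : ℝ) * ∏ k, M k 0 0 +
      (ν1 * Real.sin (ζ / 2) ^ 2 + ν2 * Real.cos (ζ / 2) ^ 2 : ℝ) * ∏ k, M k 1 1 +
      ((ν1 - ν2) * Real.sin ζ / 2 : ℝ) * (∏ k, M k 0 1 + ∏ k, M k 1 0) := by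
  have h2 : ghzPsi2 N ζ = fun i => ((Real.sin (ζ / 2) : ℝ) : ℂ) * vpow (fun _ => e2 0) i +
      ((-Real.cos (ζ / 2) : ℝ) : ℂ) * vpow (fun _ => e2 1) i := by
    funext i
    simp only [ghzPsi2]
    push_cast
    ring
  have hs : Real.sin ζ = 2 * Real.sin (ζ / 2) * Real.cos (ζ / 2) := by
    rw [← Real.sin_two_mul]
    congr 1
    ring
  have h1 : ghzPsi1 N ζ = fun i => ((Real.cos (ζ / 2) : ℝ) : ℂ) * vpow (fun _ => e2 0) i +
      ((Real.sin (ζ / 2) : ℝ) : ℂ) * vpow (fun _ => e2 1) i := rfl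
  rw [ghzRho, h2, h1, Matrix.add_mul, Matrix.trace_add, Matrix.smul_mul, Matrix.smul_mul,
    Matrix.trace_smul, Matrix.trace_smul, trace_ghz, trace_ghz, hs]
  simp only [smul_eq_mul, Complex.ofReal_add, Complex.ofReal_mul, Complex.ofReal_pow,
    Complex.ofReal_neg, Complex.ofReal_sub, Complex.ofReal_div, Complex.ofReal_ofNat]
  ring

lemma nsigma_zero (θ : ℝ) :
    nsigma θ 0 = !![(Real.cos θ : ℂ), (Real.sin θ : ℂ); (Real.sin θ : ℂ), -(Real.cos θ : ℂ)] := by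
  ext i j
  fin_cases i <;> fin_cases j <;> simp [nsigma, sigmaX, sigmaY, sigmaZ]

/-- With the last party split off: the identity (`s = 0`) has no off-diagonal entries, and `σ_x`
(`s = 1`) no diagonal ones. Only for `m ≥ 1` is the last party distinct from the first, whose
settings differ from those of the others. -/
lemma oddQ_eq (m : ℕ) (ζ ν1 ν2 θ : ℝ) (i : Fin (2 * m) → Fin 2) (s : Fin 2) (hm : 1 ≤ m) :
    oddQ m ζ ν1 ν2 θ i s =
      if s = 0 then
        (ν1 * Real.cos (ζ / 2) ^ 2 + ν2 * Real.sin (ζ / 2) ^ 2 : ℝ) *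
            ∏ k, oddSetting θ k (i k) 0 0 +
          (ν1 * Real.sin (ζ / 2) ^ 2 + ν2 * Real.cos (ζ / 2) ^ 2 : ℝ) *
            ∏ k, oddSetting θ k (i k) 1 1
      else ((ν1 - ν2) * Real.sin ζ / 2 : ℝ) *
        (∏ k, oddSetting θ k (i k) 0 1 + ∏ k, oddSetting θ k (i k) 1 0) := by
  have hm0 : m ≠ 0 := by omega
  rw [oddQ, trace_ghzRho]
  simp only [Fin.prod_univ_castSucc, Fin.val_castSucc, Fin.is_lt, dite_true, Fin.val_last,
    lt_irrefl, dite_false, Fin.eta]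
  by_cases hs : s = 0
  · simp [hs, oddSetting]
  · simp [hs, oddSetting, nsigma_zero, hm0]

/-- Summing over all choices of setting turns the product of entries into a product of sums:
`n(θ,0)·σ + σ_z` for the first party and `σ_x - σ_z` for the `2m - 1` following ones. -/
lemma sum_prod_setting (n : ℕ) (θ : ℝ) (a b : Fin 2) :
    ∑ i : Fin (2 * (n + 1)) → Fin 2, ∏ k, oddSetting θ k (i k) a b =
      (nsigma θ 0 a b + nsigma 0 0 a b) *
        (nsigma (Real.pi / 2) 0 a b + nsigma Real.pi 0 a b) ^ (2 * n + 1) := by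
  rw [← Fintype.prod_sum (fun k j => oddSetting θ k j a b)]
  change ∏ k : Fin (2 * n + 1 + 1), ∑ j, oddSetting θ k j a b = _
  rw [Fin.prod_univ_succ]
  simp [oddSetting, Fin.sum_univ_two]

/-- Same as `sum_prod_setting`, without the sum and with every party in its second setting. -/
lemma prod_second_setting (n : ℕ) (θ : ℝ) (a b : Fin 2) :
    ∏ k : Fin (2 * (n + 1)), oddSetting θ k 1 a b =
      nsigma 0 0 a b * nsigma Real.pi 0 a b ^ (2 * n + 1) := by
  change ∏ k : Fin (2 * n + 1 + 1), oddSetting θ k 1 a b = _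
  rw [Fin.prod_univ_succ]
  simp [oddSetting]

/-- The closed form before passing to the half angle. -/
lemma oddBell_eq (n : ℕ) (ζ ν1 ν2 θ : ℝ) (hsum : ν1 + ν2 = 1) :
    oddBell (n + 1) ζ ν1 ν2 θ =
      ((1 + ((ν1 - ν2) * Real.sin ζ * Real.sin θ - (1 + Real.cos θ)) / 2 ^ (2 * (n + 1)) : ℝ) :
        ℂ) := by
  have hodd : (-1 : ℂ) ^ (2 * n + 1) = -1 := Odd.neg_one_pow ⟨n, rfl⟩
  have hpq : ((ν1 * Real.cos (ζ / 2) ^ 2 + ν2 * Real.sin (ζ / 2) ^ 2 : ℝ) : ℂ) =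
      1 - ((ν1 * Real.sin (ζ / 2) ^ 2 + ν2 * Real.cos (ζ / 2) ^ 2 : ℝ) : ℂ) := by
    rw [← Complex.ofReal_one, ← Complex.ofReal_sub]
    congr 1
    linear_combination (ν1 + ν2) * Real.sin_sq_add_cos_sq (ζ / 2) + hsum
  rw [oddBell]
  simp only [Fin.sum_univ_two, oddQ_eq (n + 1) ζ ν1 ν2 θ _ _ (by omega), if_true, one_ne_zero,
    if_false, Finset.sum_add_distrib, ← Finset.mul_sum, sum_prod_setting, prod_second_setting, hpq]
  simp only [nsigma_zero, Real.sin_zero, Real.cos_zero, Real.sin_pi, Real.cos_pi,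
    Real.sin_pi_div_two, Real.cos_pi_div_two, Matrix.of_apply, Matrix.cons_val', Matrix.cons_val_zero,
    Matrix.cons_val_one, Matrix.cons_val_fin_one, Complex.ofReal_one, Complex.ofReal_zero,
    Complex.ofReal_neg, zero_add, add_zero, neg_neg, neg_zero, one_pow, hodd]
  generalize ((ν1 * Real.sin (ζ / 2) ^ 2 + ν2 * Real.cos (ζ / 2) ^ 2 : ℝ) : ℂ) = q
  push_cast
  ring

/-- For odd `N = 2m+1 ≥ 3` and every `θ ∈ [0,π)`,
`I^N = 1 + (cos²(θ/2)/2^{N−2})(V sinζ tan(θ/2) − 1)`; in particular if `V sinζ > 0` and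
`tan(θ/2) > 1/(V sinζ)`, then `I^N > 1`. -/
theorem odd_N_bell_violation (m : ℕ) (hm : 1 ≤ m) (ζ ν1 ν2 : ℝ)
    (hν1 : 0 ≤ ν1) (hν2 : 0 ≤ ν2) (hsum : ν1 + ν2 = 1) (V : ℝ) (hV : V = ν1 - ν2) :
    ∀ θ ∈ Set.Ico 0 Real.pi,
      oddBell m ζ ν1 ν2 θ =
          ((1 + Real.cos (θ / 2) ^ 2 / 2 ^ (2 * m - 1) *
            (V * Real.sin ζ * Real.tan (θ / 2) - 1) : ℝ) : ℂ) ∧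
        (0 < V * Real.sin ζ → 1 / (V * Real.sin ζ) < Real.tan (θ / 2) →
          1 < (oddBell m ζ ν1 ν2 θ).re) := by
  obtain ⟨n, rfl⟩ : ∃ n, m = n + 1 := ⟨m - 1, by omega⟩
  intro θ hθ
  have hc : 0 < Real.cos (θ / 2) :=
    Real.cos_pos_of_mem_Ioo ⟨by linarith [hθ.1, Real.pi_pos], by linarith [hθ.2]⟩
  have hkey : oddBell (n + 1) ζ ν1 ν2 θ =
      ((1 + Real.cos (θ / 2) ^ 2 / 2 ^ (2 * (n + 1) - 1) *
        (V * Real.sin ζ * Real.tan (θ / 2) - 1) : ℝ) : ℂ) := by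
    rw [oddBell_eq n ζ ν1 ν2 θ hsum, hV]
    congr 1
    have hθ2 : θ = 2 * (θ / 2) := by ring
    have hs : Real.sin θ = 2 * Real.sin (θ / 2) * Real.cos (θ / 2) := by
      rw [← Real.sin_two_mul, ← hθ2]
    have hcos : Real.cos θ = 2 * Real.cos (θ / 2) ^ 2 - 1 := by
      rw [← Real.cos_two_mul, ← hθ2]
    rw [hs, hcos, Real.tan_eq_sin_div_cos, show 2 * (n + 1) - 1 = 2 * n + 1 by omega,
      show 2 * (n + 1) = 2 * n + 1 + 1 by ring, pow_succ (2 : ℝ) (2 * n + 1)]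
    field_simp
    ring
  refine ⟨hkey, fun hpos htan => ?_⟩
  rw [hkey, Complex.ofReal_re]
  rw [div_lt_iff₀ hpos] at htan
  have : 0 < V * Real.sin ζ * Real.tan (θ / 2) - 1 := by linarith
  have := mul_pos (div_pos (pow_pos hc 2) (by positivity : (0 : ℝ) < 2 ^ (2 * (n + 1) - 1))) this
  linarith
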